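/- Let s(x,y) be a score function and let q̂ be the ⌈(N+1)(1−α)⌉/N empirical quantile of scores s₁,…,s_N computed on N i.i.d. (exchangeable) calibration points (X₁,Y₁),…,(X_N,Y_N). If (X_test, Y_test) is exchangeable with the calibration data, then Pr(Y_test ∈ C(X_test)) ≥ 1−α, where C(x) = {y : s(x,y) ≤ q̂}. -/

import Mathlib

open MeasureTheory ProbabilityTheory

theorem cc_measurable {n : ℕ} (k : ℕ) (j : Fin n) :
    MeasurableSet {v : Fin n → ℝ | (Finset.univ.filter (fun i => v i < v j)).card < k} := by
  have h : Measurable (fun v : Fin n → ℝ => (Finset.univ.filter (fun i => v i < v j)).card) := by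
    simp only [Finset.card_filter]
    refine Finset.measurable_sum _ fun i _ => ?_
    exact Measurable.ite (measurableSet_lt (measurable_pi_apply i) (measurable_pi_apply j))
      measurable_const measurable_const
  exact h measurableSet_Iio

theorem cc_count {n : ℕ} (k : ℕ) (hk : k ≤ n) (v : Fin n → ℝ) :
    k ≤ (Finset.univ.filter
      (fun j => (Finset.univ.filter (fun i => v i < v j)).card < k)).card := by
  have hmono := Tuple.monotone_sort v
  set σ := Tuple.sort v with hσ
  have hinj : Function.Injective (fun m : Fin k => σ (Fin.castLE hk m)) :=
    σ.injective.comp (Fin.castLE_injective hk)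
  calc k = (Finset.univ.image (fun m : Fin k => σ (Fin.castLE hk m))).card := by
        rw [Finset.card_image_of_injective _ hinj]; simp
    _ ≤ _ := by
        apply Finset.card_le_card
        intro j hj
        obtain ⟨m, -, rfl⟩ := Finset.mem_image.1 hj
        simp only [Finset.mem_filter, Finset.mem_univ, true_and]
        refine lt_of_le_of_lt ?_ m.2
        calc _ ≤ ((Finset.Iio (Fin.castLE hk m)).image σ).card := by
              apply Finset.card_le_card
              intro i hi
              simp only [Finset.mem_filter, Finset.mem_univ, true_and] at hi
              refine Finset.mem_image.2 ⟨σ.symm i, ?_, by simp⟩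
              rw [Finset.mem_Iio]
              by_contra hcon
              have := hmono (not_lt.1 hcon)
              simp only [Function.comp, Equiv.apply_symm_apply] at this
              exact absurd hi (not_lt.2 this)
          _ ≤ (Finset.Iio (Fin.castLE hk m)).card := Finset.card_image_le
          _ = m := by simp

theorem cc_quantile {N : ℕ} (k : ℕ) (hk1 : 1 ≤ k) (hkN : k ≤ N) (v : Fin (N + 1) → ℝ)
    (hlt : k - 1 < N)
    (h : (Finset.univ.filter (fun i => v i < v (Fin.last N))).card < k) :
    v (Fin.last N) ≤ (fun i : Fin N => v i.castSucc)
      (Tuple.sort (fun i : Fin N => v i.castSucc) ⟨k - 1, hlt⟩) := by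
  by_contra hcon
  rw [not_le] at hcon
  have hmono := Tuple.monotone_sort (fun i : Fin N => v i.castSucc)
  set σ := Tuple.sort (fun i : Fin N => v i.castSucc) with hσ
  have hinj : Function.Injective (fun m : Fin k => (σ (Fin.castLE hkN m)).castSucc) :=
    (Fin.castSucc_injective N).comp (σ.injective.comp (Fin.castLE_injective hkN))
  refine absurd h (not_lt.2 ?_)
  calc k = (Finset.univ.image (fun m : Fin k => (σ (Fin.castLE hkN m)).castSucc)).card := by
        rw [Finset.card_image_of_injective _ hinj]; simp
    _ ≤ _ := by
        apply Finset.card_le_card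
        intro j hj
        obtain ⟨m, -, rfl⟩ := Finset.mem_image.1 hj
        simp only [Finset.mem_filter, Finset.mem_univ, true_and]
        refine lt_of_le_of_lt (hmono (a := Fin.castLE hkN m) (b := ⟨k - 1, hlt⟩) ?_) hcon
        have := m.2
        rw [Fin.le_def]
        simp only [Fin.val_castLE]
        omega

/-- **Conformal coverage guarantee (lower bound).** -/
theorem conformal_coverage_lower_bound
    {Ω 𝒳 𝒴 : Type*} [MeasureSpace Ω] [IsProbabilityMeasure (ℙ : Measure Ω)]
    [MeasurableSpace 𝒳] [MeasurableSpace 𝒴]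
    (N : ℕ) (hN : 0 < N)
    (X : Fin (N + 1) → Ω → 𝒳) (Y : Fin (N + 1) → Ω → 𝒴)
    (hX : ∀ i, Measurable (X i)) (hY : ∀ i, Measurable (Y i))
    (s : 𝒳 → 𝒴 → ℝ) (hs : Measurable (fun p : 𝒳 × 𝒴 => s p.1 p.2))
    -- exchangeability of the N+1 data points (e.g. i.i.d.)
    (hexch : ∀ π : Equiv.Perm (Fin (N + 1)),
      Measure.map (fun ω i => (X (π i) ω, Y (π i) ω)) (ℙ : Measure Ω)
        = Measure.map (fun ω i => (X i ω, Y i ω)) (ℙ : Measure Ω))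
    (α : ℝ) (hα : α ∈ Set.Ioo (0 : ℝ) 1)
    (k : ℕ) (hk : (k : ℤ) = ⌈((N : ℝ) + 1) * (1 - α)⌉)
    (hk1 : 1 ≤ k) (hkN : k ≤ N)
    -- qhat is the ⌈(N+1)(1-α)⌉-th smallest calibration score
    (qhat : Ω → ℝ)
    (hq : ∀ ω, qhat ω =
      (fun i : Fin N => s (X i.castSucc ω) (Y i.castSucc ω))
        (Tuple.sort (fun i : Fin N => s (X i.castSucc ω) (Y i.castSucc ω))
          ⟨k - 1, by omega⟩)) :
    ENNReal.ofReal (1 - α)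
      ≤ (ℙ : Measure Ω) {ω | s (X (Fin.last N) ω) (Y (Fin.last N) ω) ≤ qhat ω} := by
  classical
  set S : Ω → Fin (N + 1) → ℝ := fun ω i => s (X i ω) (Y i ω) with hS
  let A : Fin (N + 1) → Set (Fin (N + 1) → ℝ) := fun j =>
    {v | (Finset.univ.filter (fun i => v i < v j)).card < k}
  have hA : ∀ j, MeasurableSet (A j) := fun j => cc_measurable k j
  have hSm : Measurable S :=
    measurable_pi_lambda _ fun i => hs.comp ((hX i).prodMk (hY i))
  have hG : Measurable (fun (z : Fin (N + 1) → 𝒳 × 𝒴) (i : Fin (N + 1)) => s (z i).1 (z i).2) :=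
    measurable_pi_lambda _ fun i => hs.comp (measurable_pi_apply i)
  have hE : ∀ j, (ℙ : Measure Ω) (S ⁻¹' A j) = (ℙ : Measure Ω) (S ⁻¹' A (Fin.last N)) := by
    intro j
    let π : Equiv.Perm (Fin (N + 1)) := Equiv.swap (Fin.last N) j
    have h := congrArg (fun μ => μ ((fun (z : Fin (N + 1) → 𝒳 × 𝒴) (i : Fin (N + 1)) =>
      s (z i).1 (z i).2) ⁻¹' A (Fin.last N))) (hexch π)
    rw [Measure.map_apply
        (measurable_pi_lambda _ fun i => (hX (π i)).prodMk (hY (π i))) (hG (hA _)),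
      Measure.map_apply
        (measurable_pi_lambda _ fun i => (hX i).prodMk (hY i)) (hG (hA _))] at h
    refine Eq.trans ?_ h
    congr 1
    ext ω
    simp only [Set.mem_preimage, A, Set.mem_setOf_eq]
    have hπ : π (Fin.last N) = j := Equiv.swap_apply_left _ _
    rw [hπ]
    have : (Finset.univ.filter (fun i => S ω i < S ω j)).card
        = (Finset.univ.filter (fun i => S ω (π i) < S ω j)).card := by
      symm
      apply Finset.card_bij (fun i _ => π i)
      · intro a ha; simpa using ha
      · intro a _ b _ hab; exact π.injective hab
      · intro b hb
        exact ⟨π.symm b, by simpa using hb, by simp⟩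
    rw [this]
  have hsum : (k : ENNReal) ≤ ∑ j, (ℙ : Measure Ω) (S ⁻¹' A j) := by
    calc (k : ENNReal) = ∫⁻ _ : Ω, (k : ENNReal) ∂(ℙ : Measure Ω) := by simp
      _ ≤ ∫⁻ ω, ∑ j, (S ⁻¹' A j).indicator (fun _ => (1 : ENNReal)) ω ∂(ℙ : Measure Ω) := by
          apply lintegral_mono
          intro ω
          have := cc_count k (by omega) (S ω)
          simp only [Set.indicator_apply, Set.mem_preimage, A, Set.mem_setOf_eq,
            Finset.sum_boole]
          exact_mod_cast this
      _ = _ := by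
          rw [lintegral_finsetSum _ fun j _ => measurable_const.indicator (hSm (hA j))]
          refine Finset.sum_congr rfl fun j _ => ?_
          rw [lintegral_indicator (hSm (hA j))]
          simp
  have hsub : S ⁻¹' A (Fin.last N)
      ⊆ {ω | s (X (Fin.last N) ω) (Y (Fin.last N) ω) ≤ qhat ω} := by
    intro ω hω
    rw [Set.mem_setOf_eq, hq ω]
    exact cc_quantile k hk1 hkN (S ω) (by omega) hω
  refine le_trans ?_ (measure_mono hsub)
  simp only [hE, Finset.sum_const, Finset.card_univ, Fintype.card_fin, nsmul_eq_mul] at hsum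
  have hkr : ((N : ℝ) + 1) * (1 - α) ≤ k := by
    have := Int.le_ceil (((N : ℝ) + 1) * (1 - α))
    rw [← hk] at this
    exact_mod_cast this
  have hfin : (ℙ : Measure Ω) (S ⁻¹' A (Fin.last N)) ≠ ⊤ := measure_ne_top _ _
  rw [ENNReal.ofReal_le_iff_le_toReal hfin]
  have h2 := ENNReal.toReal_mono (ENNReal.mul_ne_top (ENNReal.natCast_ne_top _) hfin) hsum
  rw [ENNReal.toReal_mul, ENNReal.toReal_natCast, ENNReal.toReal_natCast] at h2
  push_cast at h2
  exact le_of_mul_le_mul_left (hkr.trans h2) (by positivity)
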